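/- Let w ∈ K with f(w) ≠ 0. Then the translated polynomial f(x+w) is NP-regular if and only if every proper cluster s ∈ Σ_f has w as a rational centre and every proper cluster s ∈ Σ_f with |s| > |ρ_s|_p satisfies d_s = ρ_s. -/

import Mathlib

open Polynomial
open scoped Classical

namespace ClusterPicture

variable {K Kbar : Type*} [Field K] [Field Kbar] [Algebra K Kbar]

lemma zero_lt_top' : (0 : WithTop ℚ) < ⊤ := by
  simp

lemma withTop_add_pos {a b : WithTop ℚ} (ha : 0 ≤ a) (hb : 0 < b) : 0 < a + b := by
  rcases eq_or_ne a ⊤ with h | h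
  · subst h; rw [top_add]; exact zero_lt_top'
  · lift a to ℚ using h
    rcases eq_or_ne b ⊤ with h' | h'
    · subst h'; rw [add_top]; exact zero_lt_top'
    · lift b to ℚ using h'
      have ha' : (0 : ℚ) ≤ a := by exact_mod_cast ha
      have hb' : (0 : ℚ) < b := by exact_mod_cast hb
      exact_mod_cast add_pos_of_nonneg_of_pos ha' hb'

/-- The setting of the paper: `K` is a complete discretely valued field, with valuation `v`
normalised so that `v(K^×) = ℤ`, `Kbar` is an algebraic closure of `K`, and `v` is (the unique)
extension of the valuation to a `ℚ ∪ {∞}`-valued valuation on `Kbar`. -/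
structure Setup (K Kbar : Type*) [Field K] [Field Kbar] [Algebra K Kbar] : Type _ where
  /-- the valuation on the algebraic closure -/
  v : Kbar → WithTop ℚ
  v_top_iff : ∀ x : Kbar, v x = ⊤ ↔ x = 0
  v_one : v 1 = 0
  v_neg : ∀ x : Kbar, v (-x) = v x
  v_mul : ∀ x y : Kbar, v (x * y) = v x + v y
  v_add : ∀ x y : Kbar, min (v x) (v y) ≤ v (x + y)
  /-- the valuation is normalised: nonzero elements of `K` have integer valuation -/
  v_base_int : ∀ x : K, x ≠ 0 → ∃ n : ℤ, v (algebraMap K Kbar x) = ((n : ℚ) : WithTop ℚ)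
  /-- the valuation is surjective onto `ℤ` on `K^×`: there is a uniformiser -/
  exists_uniformiser : ∃ π : K, v (algebraMap K Kbar π) = ((1 : ℚ) : WithTop ℚ)
  /-- `Kbar` is an algebraic closure of `K` -/
  algClosed : IsAlgClosed Kbar
  algebraic : Algebra.IsAlgebraic K Kbar
  /-- `K` is complete with respect to the valuation -/
  complete : ∀ a : ℕ → K,
    (∀ q : ℚ, ∃ N : ℕ, ∀ m, N ≤ m → ∀ n, N ≤ n →
      ((q : ℚ) : WithTop ℚ) ≤ v (algebraMap K Kbar (a m - a n))) →
    ∃ b : K, ∀ q : ℚ, ∃ N : ℕ, ∀ n, N ≤ n →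
      ((q : ℚ) : WithTop ℚ) ≤ v (algebraMap K Kbar (a n - b))

/-- Valuation of an element of the base field `K`. -/
def Setup.vK (S : Setup K Kbar) (x : K) : WithTop ℚ := S.v (algebraMap K Kbar x)

/-- The finite set of roots of `f` in the algebraic closure `Kbar`. -/
noncomputable def rootFinset (f : K[X]) : Finset Kbar :=
  (f.map (algebraMap K Kbar)).roots.toFinset

/-- A cluster for `f`: a nonempty subset of the set of roots of `f` cut out by a `v`-adic disc. -/
def IsCluster (S : Setup K Kbar) (f : K[X]) (s : Finset Kbar) : Prop :=
  s.Nonempty ∧ ∃ (z : Kbar) (δ : ℚ),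
    s = (rootFinset f).filter fun r => ((δ : ℚ) : WithTop ℚ) ≤ S.v (r - z)

/-- The depth `d_s = min_{r,r' ∈ s} v (r - r')` of a cluster. -/
noncomputable def depth (S : Setup K Kbar) (s : Finset Kbar) : WithTop ℚ :=
  s.inf fun r => s.inf fun r' => S.v (r - r')

/-- `min_{r ∈ s} v (r - z)`, for `z ∈ Kbar`. -/
noncomputable def dmin (S : Setup K Kbar) (s : Finset Kbar) (z : Kbar) : WithTop ℚ :=
  s.inf fun r => S.v (r - z)

/-- `min_{r ∈ s} v (r - w)`, for `w ∈ K`. -/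
noncomputable def dminK (S : Setup K Kbar) (s : Finset Kbar) (w : K) : WithTop ℚ :=
  dmin S s (algebraMap K Kbar w)

/-- `w ∈ K` is a rational centre of `s` if it maximises `min_{r ∈ s} v (r - w)`.
For a proper cluster `s` with rational centre `w`, the radius `ρ_s` is `dminK S s w`. -/
def IsRationalCentre (S : Setup K Kbar) (s : Finset Kbar) (w : K) : Prop :=
  ∀ w' : K, dminK S s w' ≤ dminK S s w

/-- A rational cluster: a cluster cut out by a disc with centre in `K`. -/
def IsRationalCluster (S : Setup K Kbar) (f : K[X]) (s : Finset Kbar) : Prop :=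
  s.Nonempty ∧ ∃ (w : K) (δ : ℚ),
    s = (rootFinset f).filter fun r => ((δ : ℚ) : WithTop ℚ) ≤ S.v (r - algebraMap K Kbar w)

/-- A cluster centred at `w ∈ K`. -/
def IsClusterCentredAt (S : Setup K Kbar) (f : K[X]) (w : K) (s : Finset Kbar) : Prop :=
  s.Nonempty ∧ ∃ δ : ℚ,
    s = (rootFinset f).filter fun r => ((δ : ℚ) : WithTop ℚ) ≤ S.v (r - algebraMap K Kbar w)

/-- The cluster picture of `f` is almost rational: every proper cluster `s` with
`|s| > |ρ_s|_p` satisfies `d_s = ρ_s`. -/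
def AlmostRational (S : Setup K Kbar) (f : K[X]) (p : ℕ) : Prop :=
  ∀ s : Finset Kbar, IsCluster S f s → 1 < s.card →
    ∀ (w : K) (ρ : ℚ), IsRationalCentre S s w → dminK S s w = ((ρ : ℚ) : WithTop ℚ) →
      padicNorm p ρ < (s.card : ℚ) → depth S s = ((ρ : ℚ) : WithTop ℚ)

/-- The slope of the `j`-th edge of the polygon with vertices `(i_j, c_j)`. -/
def NPslope {s : ℕ} (i : Fin (s + 1) → ℕ) (c : Fin (s + 1) → ℚ) (j : Fin s) : ℚ :=
  (c j.succ - c j.castSucc) / ((i j.succ : ℚ) - (i j.castSucc : ℚ))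

/-- `(i_0, c_0), …, (i_s, c_s)` are the vertices of the Newton polygon of `f`:
the points `(i_j, c_j)` are among the points `(m, v(a_m))`, the first and last vertices lie
above the trailing and leading coefficients, the slopes of consecutive edges strictly
increase, and every point `(m, v(a_m))` lies on or above (the line spanned by) every edge. -/
structure IsNPVertices (S : Setup K Kbar) (f : K[X]) (s : ℕ)
    (i : Fin (s + 1) → ℕ) (c : Fin (s + 1) → ℚ) : Prop where
  mono : StrictMono i
  first : i 0 = f.natTrailingDegree
  last : i (Fin.last s) = f.natDegree
  vert : ∀ j, S.vK (f.coeff (i j)) = ((c j : ℚ) : WithTop ℚ)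
  slope_mono : StrictMono (NPslope i c)
  support : ∀ (j : Fin s) (m : ℕ) (q : ℚ), S.vK (f.coeff m) = ((q : ℚ) : WithTop ℚ) →
    (c j.succ - c j.castSucc) * ((m : ℚ) - (i j.castSucc : ℚ)) ≤
      (q - c j.castSucc) * ((i j.succ : ℚ) - (i j.castSucc : ℚ))

/-- The valuation ring of `Kbar`. -/
def intRing (S : Setup K Kbar) : Subring Kbar where
  carrier := {x : Kbar | (0 : WithTop ℚ) ≤ S.v x}
  zero_mem' := by
    simp only [Set.mem_setOf_eq, (S.v_top_iff 0).mpr rfl]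
    exact le_top
  one_mem' := by
    simp only [Set.mem_setOf_eq, S.v_one]
    exact le_refl _
  add_mem' := by
    intro a b ha hb
    exact le_trans (le_min ha hb) (S.v_add a b)
  mul_mem' := by
    intro a b ha hb
    simp only [Set.mem_setOf_eq, S.v_mul a b]
    exact add_nonneg ha hb
  neg_mem' := by
    intro a ha
    simpa only [Set.mem_setOf_eq, S.v_neg] using ha

lemma mem_intRing {S : Setup K Kbar} {x : Kbar} :
    x ∈ intRing S ↔ (0 : WithTop ℚ) ≤ S.v x := Iff.rfl

/-- The maximal ideal of the valuation ring of `Kbar`. -/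
def maxIdeal (S : Setup K Kbar) : Ideal (intRing S) where
  carrier := {x : intRing S | (0 : WithTop ℚ) < S.v (x : Kbar)}
  zero_mem' := by
    show (0 : WithTop ℚ) < S.v ((0 : intRing S) : Kbar)
    rw [show ((0 : intRing S) : Kbar) = 0 from rfl, (S.v_top_iff 0).mpr rfl]
    exact zero_lt_top'
  add_mem' := by
    intro a b ha hb
    show (0 : WithTop ℚ) < S.v ((a : Kbar) + (b : Kbar))
    exact lt_of_lt_of_le (lt_min ha hb) (S.v_add _ _)
  smul_mem' := by
    intro c x hx
    show (0 : WithTop ℚ) < S.v ((c : Kbar) * (x : Kbar))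
    rw [S.v_mul]
    exact withTop_add_pos c.2 hx

/-- The residue field of `Kbar`; it is an algebraic closure of the residue field `k` of `K`. -/
abbrev Residue (S : Setup K Kbar) : Type _ := intRing S ⧸ maxIdeal S

/-- Reduction to the residue field (with junk value `0` on non-integral elements). -/
noncomputable def red (S : Setup K Kbar) (x : Kbar) : Residue S :=
  if h : (0 : WithTop ℚ) ≤ S.v x then Ideal.Quotient.mk (maxIdeal S) ⟨x, mem_intRing.mpr h⟩
  else 0

/-- The reduction `f̄|_L` of `f` along the edge `L` of its Newton polygon with endpoints
`(i₁, q₁)` and `(i₂, q₂)`, of slope `ρ = nρ / n` where `n` is the denominator of `ρ`;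
`π` is a uniformiser of `K`.  This is the reduction of `π^{-q₁}·(f|_L)(π^{-nρ}·x)`, where
`f|_L (x) = ∑_j a_{n j + i₁} x^j`. -/
noncomputable def redEdge (S : Setup K Kbar) (π : K) (f : K[X])
    (i₁ i₂ : ℕ) (q₁ nρ : ℤ) (n : ℕ) : Polynomial (Residue S) :=
  ∑ j ∈ Finset.range ((i₂ - i₁) / n + 1),
    Polynomial.C (red S (algebraMap K Kbar (f.coeff (n * j + i₁)) *
      (algebraMap K Kbar π) ^ (-(q₁ + (j : ℤ) * nρ)))) * Polynomial.X ^ j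

/-- `f` is NP-regular (`Δ_v`-regular in dimension 1): for every edge `L` of its Newton
polygon, the reduction `f̄|_L` has no multiple roots in the algebraic closure of the residue
field, i.e. is separable. -/
def NPRegular (S : Setup K Kbar) (π : K) (f : K[X]) : Prop :=
  ∀ (s : ℕ) (i : Fin (s + 1) → ℕ) (c : Fin (s + 1) → ℚ),
    IsNPVertices S f s i c →
    ∀ (j : Fin s) (q₁ nρ : ℤ) (n : ℕ),
      (q₁ : ℚ) = c j.castSucc →
      n = (NPslope i c j).den →
      (nρ : ℚ) = (n : ℚ) * NPslope i c j →
      (redEdge S π f (i j.castSucc) (i j.succ) q₁ nρ n).Separable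

/-- The vertex-index function of the Newton polygon of `f(x+w)`, in terms of the sizes of
the clusters `s_1 ⊂ … ⊂ s_{n+1}` centred at `w`; here `t` is the prescribed first index. -/
def vertIdx {n : ℕ} (t : ℕ) (s : Fin (n + 1) → Finset Kbar) : Fin (n + 2) → ℕ :=
  fun j => Fin.cases (motive := fun _ => ℕ) t (fun j' => (s j').card) j

/-- The vertex-value function of the Newton polygon of `f(x+w)`: the vertex over `|s_j|` has
second coordinate `ε_{s_j} - |s_j|·ρ_{s_j}`; `c0` is the prescribed value at the first vertex. -/
def vertVal {n : ℕ} (c0 : ℚ) (s : Fin (n + 1) → Finset Kbar) (ρ ε : Fin (n + 1) → ℚ) :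
    Fin (n + 2) → ℚ :=
  fun j => Fin.cases (motive := fun _ => ℚ) c0 (fun j' => ε j' - ((s j').card : ℚ) * ρ j') j

section helpers

/-! ### A lemma on separability and root multiplicities -/

lemma rootMult_pow_sub {k : Type*} [Field k] (p : ℕ) (hp : p.Prime) (hpk : (p : k) = 0)
    (n : ℕ) (hn : 0 < n) (b : k) (hb : b ≠ 0) :
    (X ^ n - C (b ^ n) : k[X]).rootMultiplicity b = p ^ (n.factorization p) := by
  have : Fact p.Prime := ⟨hp⟩
  have : CharP k p := (CharP.charP_iff_prime_eq_zero hp).mpr hpk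
  set e := n.factorization p with he
  obtain ⟨n', hn'⟩ : p ^ e ∣ n := Nat.ordProj_dvd n p
  have hn'' : ¬ p ∣ n' := by
    have : n' = n / p ^ e := by
      rw [hn', Nat.mul_div_cancel_left _ (pow_pos hp.pos _)]
    rw [this]; exact Nat.not_dvd_ordCompl hp hn.ne'
  have hfac : (X ^ n - C (b ^ n) : k[X]) = (X ^ n' - C (b ^ n')) ^ (p ^ e) := by
    rw [sub_pow_char_pow, ← pow_mul, ← C_pow, ← pow_mul, mul_comm n', ← hn']
  have hn0 : n' ≠ 0 := by rintro rfl; simp at hn''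
  have hnk : (n' : k) ≠ 0 := by
    rw [Ne, CharP.cast_eq_zero_iff k p]; exact hn''
  have hs : (X ^ n' - C (b ^ n') : k[X]).Separable :=
    separable_X_pow_sub_C _ hnk (pow_ne_zero _ hb)
  have hne : (X ^ n' - C (b ^ n') : k[X]) ≠ 0 := hs.ne_zero
  have h1 : (X ^ n' - C (b ^ n') : k[X]).rootMultiplicity b = 1 := by
    apply le_antisymm
    · exact rootMultiplicity_le_one_of_separable hs b
    · rw [Nat.succ_le_iff, rootMultiplicity_pos hne]; simp
  rw [hfac]
  rw [← count_roots, roots_pow, Multiset.count_nsmul, count_roots, h1, mul_one]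

lemma rootMult_prod {k ι : Type*} [Field k] (T : Finset ι) (b : ι → k) (x : k) :
    (∏ i ∈ T, (X - C (b i))).rootMultiplicity x = (T.filter fun i => b i = x).card := by
  rw [← count_roots]
  have : (∏ i ∈ T, (X - C (b i))) = ((T.val.map b).map fun a => X - C a).prod := by
    rw [Multiset.map_map]; rfl
  rw [this, roots_multiset_prod_X_sub_C, Multiset.count_map]
  simp only [Finset.card, Finset.filter_val]
  congr 1
  apply Multiset.filter_congr
  intros; exact eq_comm

lemma separable_iff_count {k ι : Type*} [Field k] (p : ℕ) (hp : p.Prime) (hpk : (p : k) = 0)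
    (n : ℕ) (hn : 0 < n) (u : k) (hu : u ≠ 0) (h : k[X]) (T : Finset ι) (b : ι → k)
    (hb : ∀ i ∈ T, b i ≠ 0)
    (heq : C u * expand k n h = ∏ i ∈ T, (X - C (b i))) :
    h.Separable ↔ ∀ i ∈ T, (T.filter fun j => b j = b i).card ≤ p ^ (n.factorization p) := by
  have hprod : (∏ i ∈ T, (X - C (b i))) ≠ 0 := (monic_prod_X_sub_C _ _).ne_zero
  have hE : expand k n h ≠ 0 := by rintro h0; rw [h0, mul_zero] at heq; exact hprod heq.symm
  have hh : h ≠ 0 := by rintro rfl; simp at hE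
  constructor
  · intro hs i hi
    rw [← rootMult_prod, ← heq, rootMultiplicity_mul (by simp [hu, hE]), rootMultiplicity_C,
      zero_add]
    by_cases hr : h.IsRoot (b i ^ n)
    · obtain ⟨h1, rfl⟩ := dvd_iff_isRoot.mpr hr
      have h1r : ¬ h1.IsRoot (b i ^ n) := by
        intro h1r
        have h2 := rootMultiplicity_le_one_of_separable hs (b i ^ n)
        rw [rootMultiplicity_mul hh, rootMultiplicity_X_sub_C_self] at h2
        have h3 := (rootMultiplicity_pos (right_ne_zero_of_mul hh)).mpr h1r
        omega
      rw [map_mul] at hE ⊢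
      rw [rootMultiplicity_mul hE]
      have h4 : (expand k n h1).rootMultiplicity (b i) = 0 := by
        apply rootMultiplicity_eq_zero
        simpa [IsRoot, expand_eval] using h1r
      rw [h4, add_zero]
      simp only [map_sub, expand_X, expand_C]
      rw [rootMult_pow_sub p hp hpk n hn _ (hb i hi)]
    · rw [rootMultiplicity_eq_zero]
      · exact Nat.zero_le _
      · simpa [IsRoot, expand_eval] using hr
  · intro hc
    by_contra hs
    let φ := algebraMap k (AlgebraicClosure k)
    have hφ : Function.Injective φ := φ.injective
    have hs' : ¬ (h.map φ).Separable := by rwa [separable_map]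
    have hhφ : h.map φ ≠ 0 := by rwa [Ne, Polynomial.map_eq_zero]
    -- a multiple root
    have hex : ∃ a, (X - C a) ^ 2 ∣ h.map φ := by
      by_contra hcon
      push Not at hcon
      apply hs'
      have hspl := IsAlgClosed.splits (h.map φ)
      rw [← nodup_roots_iff_of_splits hhφ hspl, Multiset.nodup_iff_count_le_one]
      intro a
      rw [count_roots]
      by_contra h2
      push Not at h2
      exact hcon a ((le_rootMultiplicity_iff hhφ).mp h2)
    obtain ⟨a, ha⟩ := hex
    obtain ⟨c, hc'⟩ := IsAlgClosed.exists_pow_nat_eq a hn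
    have heq' : C (φ u) * expand _ n (h.map φ) = ∏ i ∈ T, (X - C (φ (b i))) := by
      have := congrArg (Polynomial.map φ) heq
      simpa [Polynomial.map_mul, map_expand, Polynomial.map_prod] using this
    have hE' : expand _ n (h.map φ) ≠ 0 := by
      rwa [Ne, expand_eq_zero hn]
    obtain ⟨t, ht⟩ := ha
    have hmul : expand _ n (h.map φ) = (X ^ n - C a) ^ 2 * expand _ n t := by
      rw [ht]; simp
    have hcount : (T.filter fun j => φ (b j) = c).card =
        (expand _ n (h.map φ)).rootMultiplicity c := by
      rw [← rootMult_prod, ← heq', rootMultiplicity_mul, rootMultiplicity_C, zero_add]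
      exact mul_ne_zero (by simpa using hu) hE'
    have hpos : 0 < (T.filter fun j => φ (b j) = c).card := by
      rw [hcount, rootMultiplicity_pos hE', hmul, ← hc']
      simp [IsRoot]
    obtain ⟨i, hi⟩ := Finset.card_pos.mp hpos
    obtain ⟨hiT, hic⟩ := Finset.mem_filter.mp hi
    have hc0 : c ≠ 0 := by
      rw [← hic]; simpa using hb i hiT
    have hpφ : (p : AlgebraicClosure k) = 0 := by
      have := congrArg φ hpk; simpa using this
    have hge : 2 * p ^ (n.factorization p) ≤ (expand _ n (h.map φ)).rootMultiplicity c := by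
      rw [hmul] at hE' ⊢
      rw [rootMultiplicity_mul hE', ← count_roots, roots_pow, Multiset.count_nsmul, count_roots,
        ← hc', rootMult_pow_sub p hp hpφ n hn c hc0]
      omega
    have := hc i hiT
    have h5 : (T.filter fun j => b j = b i) = (T.filter fun j => φ (b j) = c) := by
      apply Finset.filter_congr
      intro j _
      rw [← hic, hφ.eq_iff]
    rw [h5, hcount] at this
    have hpp : 0 < p ^ (n.factorization p) := pow_pos hp.pos _
    omega

end helpers
section valuation

variable (S : Setup K Kbar)

/-- Rational-valued valuation (junk value `0` at `0`). -/
noncomputable def vq (x : Kbar) : ℚ := (S.v x).untopD 0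

lemma coe_vq {x : Kbar} (hx : x ≠ 0) : S.v x = ((vq S x : ℚ) : WithTop ℚ) := by
  have : S.v x ≠ ⊤ := fun h => hx ((S.v_top_iff x).mp h)
  unfold vq
  lift S.v x to ℚ using this with q
  rfl

lemma vq_eq_of {x : Kbar} {q : ℚ} (h : S.v x = (q : WithTop ℚ)) : vq S x = q := by
  unfold vq; rw [h]; rfl

lemma ne_zero_of_v {x : Kbar} {q : ℚ} (h : S.v x = (q : WithTop ℚ)) : x ≠ 0 := by
  rintro rfl
  rw [(S.v_top_iff 0).mpr rfl] at h
  exact WithTop.top_ne_coe h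

lemma vq_mul {x y : Kbar} (hx : x ≠ 0) (hy : y ≠ 0) : vq S (x * y) = vq S x + vq S y := by
  apply vq_eq_of
  rw [S.v_mul, coe_vq S hx, coe_vq S hy]; rfl

lemma vq_one : vq S 1 = 0 := vq_eq_of S S.v_one

lemma vq_neg (x : Kbar) : vq S (-x) = vq S x := by unfold vq; rw [S.v_neg]

lemma vq_inv {x : Kbar} (hx : x ≠ 0) : vq S x⁻¹ = - vq S x := by
  have := vq_mul S hx (inv_ne_zero hx)
  rw [mul_inv_cancel₀ hx, vq_one] at this
  linarith

lemma vq_div {x y : Kbar} (hx : x ≠ 0) (hy : y ≠ 0) : vq S (x / y) = vq S x - vq S y := by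
  rw [div_eq_mul_inv, vq_mul S hx (inv_ne_zero hy), vq_inv S hy]; ring

lemma vq_pow {x : Kbar} (hx : x ≠ 0) (n : ℕ) : vq S (x ^ n) = n * vq S x := by
  induction n with
  | zero => simp [vq_one]
  | succ n ih => rw [pow_succ, vq_mul S (pow_ne_zero _ hx) hx, ih]; push_cast; ring

lemma vq_zpow {x : Kbar} (hx : x ≠ 0) (n : ℤ) : vq S (x ^ n) = n * vq S x := by
  cases n with
  | ofNat n => simpa using vq_pow S hx n
  | negSucc n =>
    rw [zpow_negSucc, vq_inv S (pow_ne_zero _ hx), vq_pow S hx]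
    push_cast; ring

lemma v_nonneg_iff {x : Kbar} (hx : x ≠ 0) : 0 ≤ S.v x ↔ 0 ≤ vq S x := by
  rw [coe_vq S hx]; norm_cast

lemma v_pos_iff {x : Kbar} (hx : x ≠ 0) : 0 < S.v x ↔ 0 < vq S x := by
  rw [coe_vq S hx]; norm_cast

/-- The valuation as a Mathlib additive valuation. -/
noncomputable def addV : AddValuation Kbar (WithTop ℚ) :=
  AddValuation.of S.v ((S.v_top_iff 0).mpr rfl) S.v_one S.v_add S.v_mul

lemma addV_apply (x : Kbar) : addV S x = S.v x := rfl

lemma one_not_mem : (1 : intRing S) ∉ maxIdeal S := by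
  intro h
  have : (0 : WithTop ℚ) < S.v ((1 : intRing S) : Kbar) := h
  rw [show ((1 : intRing S) : Kbar) = 1 from rfl, S.v_one] at this
  exact lt_irrefl _ this

lemma maxIdeal_isMaximal : (maxIdeal S).IsMaximal := by
  rw [Ideal.isMaximal_iff]
  refine ⟨one_not_mem S, ?_⟩
  intro J x hJ hx hxJ
  have hx0 : (x : Kbar) ≠ 0 := by
    intro h
    apply hx
    have : x = 0 := Subtype.ext h
    rw [this]; exact (maxIdeal S).zero_mem
  have h1 : ¬ (0 < vq S (x : Kbar)) := by
    rw [← v_pos_iff S hx0]; exact hx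
  have h2 : 0 ≤ S.v ((x : Kbar)⁻¹) := by
    rw [v_nonneg_iff S (inv_ne_zero hx0), vq_inv S hx0]; linarith
  have h3 : (⟨(x : Kbar)⁻¹, h2⟩ : intRing S) * x = 1 := by
    apply Subtype.ext
    exact inv_mul_cancel₀ hx0
  rw [← h3]
  exact J.mul_mem_left _ hxJ

/-- Lift to the ring of integers with junk value `0`. -/
noncomputable def lft (x : Kbar) : intRing S :=
  if h : (0 : WithTop ℚ) ≤ S.v x then ⟨x, mem_intRing.mpr h⟩ else 0

lemma lft_coe {x : Kbar} (h : 0 ≤ S.v x) : ((lft S x : intRing S) : Kbar) = x := by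
  unfold lft; rw [dif_pos h]

lemma mk_lft (x : Kbar) : Ideal.Quotient.mk (maxIdeal S) (lft S x) = red S x := by
  unfold lft red
  split_ifs
  · rfl
  · simp

lemma red_coe (x : intRing S) : red S (x : Kbar) = Ideal.Quotient.mk (maxIdeal S) x := by
  unfold red
  rw [dif_pos (show 0 ≤ S.v (x : Kbar) from x.2)]

lemma red_eq_zero_iff {x : Kbar} (h : 0 ≤ S.v x) : red S x = 0 ↔ 0 < S.v x := by
  unfold red
  rw [dif_pos h, Ideal.Quotient.eq_zero_iff_mem]
  rfl

lemma red_mul {x y : Kbar} (hx : 0 ≤ S.v x) (hy : 0 ≤ S.v y) :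
    red S (x * y) = red S x * red S y := by
  have := red_coe S (lft S x * lft S y)
  rw [show ((lft S x * lft S y : intRing S) : Kbar) = (lft S x : Kbar) * (lft S y : Kbar) from rfl,
    lft_coe S hx, lft_coe S hy, map_mul, mk_lft, mk_lft] at this
  exact this

lemma red_sub {x y : Kbar} (hx : 0 ≤ S.v x) (hy : 0 ≤ S.v y) :
    red S (x - y) = red S x - red S y := by
  have := red_coe S (lft S x - lft S y)
  rw [show ((lft S x - lft S y : intRing S) : Kbar) = (lft S x : Kbar) - (lft S y : Kbar) from rfl,
    lft_coe S hx, lft_coe S hy, map_sub, mk_lft, mk_lft] at this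
  exact this

lemma key_red (R : Finset Kbar) (β : Kbar → Kbar) (hβ : ∀ r ∈ R, β r ≠ 0)
    (c : Kbar) (hc : c ≠ 0) (θ : Kbar) (hθ : θ ≠ 0) :
    ∃ E : Kbar, E ≠ 0 ∧ ∀ m,
      0 ≤ S.v (E * ((C c * ∏ r ∈ R, (X - C (β r))).coeff m * θ ^ m)) ∧
      red S (E * ((C c * ∏ r ∈ R, (X - C (β r))).coeff m * θ ^ m)) =
        (X ^ (R.filter fun r => vq S θ < vq S (β r)).card *
          ∏ r ∈ R.filter fun r => vq S (β r) = vq S θ, (X - C (red S (β r / θ)))).coeff m := by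
  set P := fun r => vq S θ ≤ vq S (β r) with hP
  set Q : (intRing S)[X] := (∏ r ∈ R.filter P, (X - C (lft S (β r / θ)))) *
    ∏ r ∈ R.filter (fun r => ¬ P r), (1 - C (lft S (θ / β r)) * X) with hQ
  have hD : (∏ r ∈ R.filter (fun r => ¬ P r), (-β r)) ≠ 0 := by
    rw [Finset.prod_ne_zero_iff]
    intro r hr; exact neg_ne_zero.mpr (hβ r (Finset.mem_filter.mp hr).1)
  set E0 := c * (θ ^ (R.filter P).card * ∏ r ∈ R.filter (fun r => ¬ P r), (-β r)) with hE0
  have hE0' : E0 ≠ 0 := mul_ne_zero hc (mul_ne_zero (pow_ne_zero _ hθ) hD)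
  have h1 : (C c * ∏ r ∈ R, (X - C (β r))).comp (C θ * X) =
      C E0 * Q.map (intRing S).subtype := by
    rw [mul_comp, C_comp, prod_comp, hE0, C_mul, mul_assoc]
    congr 1
    rw [← Finset.prod_filter_mul_prod_filter_not R P, hQ, Polynomial.map_mul, C_mul,
      mul_mul_mul_comm, C_pow, map_prod C]
    congr 1
    · rw [← Finset.prod_const, Polynomial.map_prod, ← Finset.prod_mul_distrib]
      apply Finset.prod_congr rfl
      intro r hr
      obtain ⟨hrR, hrP⟩ := Finset.mem_filter.mp hr
      have h0 : 0 ≤ S.v (β r / θ) := by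
        rw [v_nonneg_iff S (div_ne_zero (hβ r hrR) hθ), vq_div S (hβ r hrR) hθ]
        exact sub_nonneg.mpr hrP
      simp only [sub_comp, X_comp, C_comp, Polynomial.map_sub, map_X, map_C, Subring.subtype_apply,
        lft_coe S h0]
      rw [mul_sub, ← C_mul, mul_div_cancel₀ _ hθ]
    · rw [Polynomial.map_prod, ← Finset.prod_mul_distrib]
      apply Finset.prod_congr rfl
      intro r hr
      obtain ⟨hrR, hrP⟩ := Finset.mem_filter.mp hr
      have h0 : 0 ≤ S.v (θ / β r) := by
        rw [v_nonneg_iff S (div_ne_zero hθ (hβ r hrR)), vq_div S hθ (hβ r hrR)]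
        exact sub_nonneg.mpr (not_le.mp hrP).le
      simp only [sub_comp, X_comp, C_comp, Polynomial.map_sub, map_X, map_C, Subring.subtype_apply,
        lft_coe S h0, Polynomial.map_mul, Polynomial.map_one]
      rw [mul_sub, ← mul_assoc, ← C_mul, neg_mul, mul_div_cancel₀ _ (hβ r hrR)]
      simp only [C_neg]
      ring
  have h2 : Q.map (Ideal.Quotient.mk (maxIdeal S)) =
      (X ^ (R.filter fun r => vq S θ < vq S (β r)).card *
          ∏ r ∈ R.filter fun r => vq S (β r) = vq S θ, (X - C (red S (β r / θ)))) := by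
    rw [hQ, Polynomial.map_mul]
    have hb : (∏ r ∈ R.filter (fun r => ¬ P r), (1 - C (lft S (θ / β r)) * X)).map
        (Ideal.Quotient.mk (maxIdeal S)) = 1 := by
      rw [Polynomial.map_prod]
      apply Finset.prod_eq_one
      intro r hr
      obtain ⟨hrR, hrP⟩ := Finset.mem_filter.mp hr
      have h0 : 0 < S.v (θ / β r) := by
        rw [v_pos_iff S (div_ne_zero hθ (hβ r hrR)), vq_div S hθ (hβ r hrR)]
        exact sub_pos.mpr (not_le.mp hrP)
      simp only [Polynomial.map_sub, map_X, map_C, Polynomial.map_mul, Polynomial.map_one, mk_lft,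
        (red_eq_zero_iff S h0.le).mpr h0]
      simp
    rw [hb, mul_one, ← Finset.prod_filter_mul_prod_filter_not (R.filter P)
      (fun r => vq S θ < vq S (β r)), Polynomial.map_mul]
    congr 1
    · rw [Polynomial.map_prod]
      have hs : (R.filter P).filter (fun r => vq S θ < vq S (β r)) =
          R.filter (fun r => vq S θ < vq S (β r)) := by
        ext r; simp only [Finset.mem_filter, hP]
        constructor
        · rintro ⟨⟨a, b⟩, c⟩; exact ⟨a, c⟩
        · rintro ⟨a, c⟩; exact ⟨⟨a, c.le⟩, c⟩
      rw [hs]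
      apply Finset.prod_eq_pow_card
      intro r hr
      obtain ⟨hrR, hrP⟩ := Finset.mem_filter.mp hr
      have h0 : 0 < S.v (β r / θ) := by
        rw [v_pos_iff S (div_ne_zero (hβ r hrR) hθ), vq_div S (hβ r hrR) hθ]
        exact sub_pos.mpr hrP
      simp only [Polynomial.map_sub, map_X, map_C, mk_lft, (red_eq_zero_iff S h0.le).mpr h0]
      simp
    · rw [Polynomial.map_prod]
      have hs : (R.filter P).filter (fun r => ¬ vq S θ < vq S (β r)) =
          R.filter (fun r => vq S (β r) = vq S θ) := by
        ext r; simp only [Finset.mem_filter, hP, not_lt]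
        constructor
        · rintro ⟨⟨a, b⟩, c⟩; exact ⟨a, le_antisymm c b⟩
        · rintro ⟨a, c⟩; exact ⟨⟨a, c.ge⟩, c.le⟩
      rw [hs]
      apply Finset.prod_congr rfl
      intro r hr
      simp only [Polynomial.map_sub, map_X, map_C, mk_lft]
  refine ⟨E0⁻¹, inv_ne_zero hE0', fun m => ?_⟩
  have h3 : E0⁻¹ * ((C c * ∏ r ∈ R, (X - C (β r))).coeff m * θ ^ m) = ((Q.coeff m : intRing S) : Kbar) := by
    have := congrArg (fun q => q.coeff m) h1
    simp only [comp_C_mul_X_coeff] at this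
    rw [this, coeff_C_mul, ← mul_assoc, inv_mul_cancel₀ hE0', one_mul, coeff_map]
    rfl
  rw [h3]
  refine ⟨(Q.coeff m).2, ?_⟩
  rw [red_coe, ← h2, coeff_map]

end valuation
section keyfacts

variable (S : Setup K Kbar)

lemma algMap_ne_zero {x : K} (hx : x ≠ 0) : algebraMap K Kbar x ≠ 0 := by
  simpa using hx

lemma exists_theta (π : K) (hπ : S.vK π = ((1 : ℚ) : WithTop ℚ)) (n : ℕ) (hn : 0 < n) (M : ℤ) :
    ∃ θ : Kbar, θ ≠ 0 ∧ θ ^ n = (algebraMap K Kbar π) ^ M ∧ vq S θ = (M : ℚ) / n := by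
  have := S.algClosed
  have hπ0 : algebraMap K Kbar π ≠ 0 := ne_zero_of_v S hπ
  have hπ1 : vq S (algebraMap K Kbar π) = 1 := vq_eq_of S hπ
  obtain ⟨θ, hθ⟩ := IsAlgClosed.exists_pow_nat_eq ((algebraMap K Kbar π) ^ M) hn
  have h0 : θ ≠ 0 := by
    rintro rfl
    rw [zero_pow hn.ne'] at hθ
    exact zpow_ne_zero M hπ0 hθ.symm
  refine ⟨θ, h0, hθ, ?_⟩
  have h1 := congrArg (vq S) hθ
  rw [vq_pow S h0, vq_zpow S hπ0, hπ1, mul_one] at h1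
  have : (n : ℚ) ≠ 0 := by exact_mod_cast hn.ne'
  rw [← h1]; field_simp

/-- Number of roots of large valuation. -/
noncomputable def N1 (R : Finset Kbar) (β : Kbar → Kbar) (ρ : ℚ) : ℕ :=
  (R.filter fun r => ρ < vq S (β r)).card

/-- Number of roots of valuation at least `ρ`. -/
noncomputable def N2 (R : Finset Kbar) (β : Kbar → Kbar) (ρ : ℚ) : ℕ :=
  (R.filter fun r => ρ ≤ vq S (β r)).card

lemma N2_eq (R : Finset Kbar) (β : Kbar → Kbar) (ρ : ℚ) :
    N2 S R β ρ = N1 S R β ρ + (R.filter fun r => vq S (β r) = ρ).card := by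
  unfold N1 N2
  rw [← Finset.card_union_of_disjoint]
  · congr 1
    ext r
    simp only [Finset.mem_filter, Finset.mem_union, le_iff_lt_or_eq]
    grind
  · rw [Finset.disjoint_left]
    intro r h1 h2
    simp only [Finset.mem_filter] at h1 h2
    linarith [h1.2, h2.2]

lemma red_div_ne_zero {x y : Kbar} (hx : x ≠ 0) (hy : y ≠ 0) (h : vq S x = vq S y) :
    red S (x / y) ≠ 0 := by
  have hd := div_ne_zero hx hy
  have h0 : vq S (x / y) = 0 := by rw [vq_div S hx hy, h, sub_self]
  rw [Ne, red_eq_zero_iff S ((v_nonneg_iff S hd).mpr h0.ge), v_pos_iff S hd, h0]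
  exact lt_irrefl _

lemma prod_coeff_zero_ne {ι : Type*} (T : Finset ι) (x : ι → Residue S) (hx : ∀ i ∈ T, x i ≠ 0) :
    (∏ i ∈ T, (X - C (x i))).coeff 0 ≠ 0 := by
  have := maxIdeal_isMaximal S
  have := this.isPrime
  rw [coeff_zero_eq_eval_zero, eval_prod, Finset.prod_ne_zero_iff]
  intro i hi
  simpa using hx i hi

lemma prod_natDegree {ι : Type*} (T : Finset ι) (x : ι → Residue S) :
    (∏ i ∈ T, (X - C (x i))).natDegree = T.card ∧
    (∏ i ∈ T, (X - C (x i))).coeff T.card = 1 := by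
  have := maxIdeal_isMaximal S
  have := this.isPrime
  have h1 : (∏ i ∈ T, (X - C (x i))).natDegree = T.card := by
    rw [natDegree_prod_of_monic _ _ (fun i _ => monic_X_sub_C _)]
    simp
  refine ⟨h1, ?_⟩
  have h2 : (∏ i ∈ T, (X - C (x i))).Monic := monic_prod_X_sub_C _ _
  rw [← h1]; exact h2

lemma key_val (g : K[X]) (R : Finset Kbar) (β : Kbar → Kbar) (hβ : ∀ r ∈ R, β r ≠ 0)
    (c : Kbar) (hc : c ≠ 0)
    (hG : g.map (algebraMap K Kbar) = C c * ∏ r ∈ R, (X - C (β r)))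
    (θ : Kbar) (hθ : θ ≠ 0) (ρ : ℚ) (hρ : vq S θ = ρ) :
    ∃ E : Kbar, E ≠ 0 ∧
      (∀ m, 0 ≤ S.v (E * (algebraMap K Kbar (g.coeff m) * θ ^ m)) ∧
        red S (E * (algebraMap K Kbar (g.coeff m) * θ ^ m)) =
        (X ^ (N1 S R β ρ) *
          ∏ r ∈ R.filter fun r => vq S (β r) = ρ, (X - C (red S (β r / θ)))).coeff m) ∧
      (∀ m, g.coeff m ≠ 0 → - vq S E ≤ vq S (algebraMap K Kbar (g.coeff m)) + m * ρ) ∧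
      (g.coeff (N1 S R β ρ) ≠ 0 ∧
        vq S (algebraMap K Kbar (g.coeff (N1 S R β ρ))) + (N1 S R β ρ : ℕ) * ρ = - vq S E) ∧
      (g.coeff (N2 S R β ρ) ≠ 0 ∧
        vq S (algebraMap K Kbar (g.coeff (N2 S R β ρ))) + (N2 S R β ρ : ℕ) * ρ = - vq S E) ∧
      (∀ m, g.coeff m ≠ 0 → vq S (algebraMap K Kbar (g.coeff m)) + m * ρ = - vq S E →
        N1 S R β ρ ≤ m ∧ m ≤ N2 S R β ρ) := by
  obtain ⟨E, hE, hm⟩ := key_red S R β hβ c hc θ hθ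
  rw [← hG, hρ] at hm
  simp only [coeff_map] at hm
  have hval : ∀ m, g.coeff m ≠ 0 → E * (algebraMap K Kbar (g.coeff m) * θ ^ m) ≠ 0 ∧
      vq S (E * (algebraMap K Kbar (g.coeff m) * θ ^ m)) =
        vq S E + (vq S (algebraMap K Kbar (g.coeff m)) + m * ρ) := by
    intro m h0
    have h1 := algMap_ne_zero (Kbar := Kbar) h0
    refine ⟨mul_ne_zero hE (mul_ne_zero h1 (pow_ne_zero _ hθ)), ?_⟩
    rw [vq_mul S hE (mul_ne_zero h1 (pow_ne_zero _ hθ)), vq_mul S h1 (pow_ne_zero _ hθ),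
      vq_pow S hθ, hρ]
  set P := ∏ r ∈ R.filter fun r => vq S (β r) = ρ, (X - C (red S (β r / θ))) with hP
  have hPc : P.coeff 0 ≠ 0 := by
    apply prod_coeff_zero_ne
    intro r hr
    obtain ⟨hrR, hr2⟩ := Finset.mem_filter.mp hr
    exact red_div_ne_zero S (hβ r hrR) hθ (hr2.trans hρ.symm)
  obtain ⟨hPd, hP1⟩ := prod_natDegree S (R.filter fun r => vq S (β r) = ρ) (fun r => red S (β r / θ))
  rw [← hP] at hPd hP1
  have hone : (1 : Residue S) ≠ 0 := by
    intro h
    exact one_not_mem S (Ideal.Quotient.eq_zero_iff_mem.mp h)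
  -- vertices
  have hvert : ∀ m, (X ^ (N1 S R β ρ) * P).coeff m ≠ 0 →
      (g.coeff m ≠ 0 ∧ vq S (algebraMap K Kbar (g.coeff m)) + m * ρ = - vq S E) := by
    intro m hne
    have hgm : g.coeff m ≠ 0 := by
      intro h0
      have h2 := (hm m).2
      change _ = (X ^ (N1 S R β ρ) * P).coeff m at h2
      rw [h0, map_zero, zero_mul, mul_zero] at h2
      apply hne
      rw [← h2, red_eq_zero_iff S]
      · rw [(S.v_top_iff 0).mpr rfl]; exact zero_lt_top'
      · rw [(S.v_top_iff 0).mpr rfl]; exact le_top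
    obtain ⟨h1, h2⟩ := hval m hgm
    refine ⟨hgm, ?_⟩
    have h3 := (v_nonneg_iff S h1).mp (hm m).1
    have h4 : ¬ 0 < S.v (E * (algebraMap K Kbar (g.coeff m) * θ ^ m)) := by
      rw [← red_eq_zero_iff S (hm m).1, (hm m).2]; exact hne
    rw [v_pos_iff S h1] at h4
    linarith
  refine ⟨E, hE, hm, ?_, ?_, ?_, ?_⟩
  · intro m h0
    obtain ⟨h1, h2⟩ := hval m h0
    have h3 := (v_nonneg_iff S h1).mp (hm m).1
    linarith
  · apply hvert
    rw [coeff_X_pow_mul']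
    simpa using hPc
  · apply hvert
    rw [coeff_X_pow_mul', N2_eq]
    simpa [hP1] using hone
  · intro m h0 he
    obtain ⟨h1, h2⟩ := hval m h0
    have h4 : ¬ 0 < S.v (E * (algebraMap K Kbar (g.coeff m) * θ ^ m)) := by
      rw [v_pos_iff S h1]; linarith
    rw [← red_eq_zero_iff S (hm m).1, (hm m).2] at h4
    change ¬ (X ^ (N1 S R β ρ) * P).coeff m = 0 at h4
    rw [coeff_X_pow_mul'] at h4
    by_cases hle : N1 S R β ρ ≤ m
    · refine ⟨hle, ?_⟩
      rw [if_pos hle] at h4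
      have := le_natDegree_of_ne_zero h4
      rw [hPd] at this
      rw [N2_eq]; omega
    · rw [if_neg hle] at h4
      exact absurd rfl h4

lemma redEdge_coeff (π : K) (g : K[X]) (i₁ i₂ : ℕ) (q₁ M : ℤ) (n j : ℕ) :
    (redEdge S π g i₁ i₂ q₁ M n).coeff j =
      if j ≤ (i₂ - i₁) / n then red S (algebraMap K Kbar (g.coeff (n * j + i₁)) *
      (algebraMap K Kbar π) ^ (-(q₁ + (j : ℤ) * M))) else 0 := by
  unfold redEdge
  rw [finset_sum_coeff]
  simp only [coeff_C_mul_X_pow]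
  rw [Finset.sum_ite_eq]
  simp [Nat.lt_succ_iff]

lemma red_zero : red S 0 = 0 := by
  rw [red_eq_zero_iff S] <;> rw [(S.v_top_iff 0).mpr rfl]
  · exact zero_lt_top'
  · exact le_top

lemma redEdge_expand (π : K) (hπ : S.vK π = ((1 : ℚ) : WithTop ℚ))
    (g : K[X]) (R : Finset Kbar) (β : Kbar → Kbar) (hβ : ∀ r ∈ R, β r ≠ 0)
    (c : Kbar) (hc : c ≠ 0)
    (hG : g.map (algebraMap K Kbar) = C c * ∏ r ∈ R, (X - C (β r)))
    (n : ℕ) (hn : 0 < n) (M : ℤ) (hcop : Nat.Coprime M.natAbs n)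
    (θ : Kbar) (hθ : θ ≠ 0) (hθn : θ ^ n = (algebraMap K Kbar π) ^ (-M))
    (ρ : ℚ) (hρ : vq S θ = ρ) (hρM : ρ * n = - M) (q₁ : ℤ)
    (hq : (q₁ : ℚ) = vq S (algebraMap K Kbar (g.coeff (N1 S R β ρ)))) :
    ∃ u : Residue S, u ≠ 0 ∧
      C u * expand _ n (redEdge S π g (N1 S R β ρ) (N2 S R β ρ) q₁ M n) =
        ∏ r ∈ R.filter fun r => vq S (β r) = ρ, (X - C (red S (β r / θ))) := by
  obtain ⟨E, hE, hm, hge, ⟨hN1, hN1e⟩, -, -⟩ := key_val S g R β hβ c hc hG θ hθ ρ hρ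
  have hπ0 : algebraMap K Kbar π ≠ 0 := ne_zero_of_v S hπ
  have hπ1 : vq S (algebraMap K Kbar π) = 1 := vq_eq_of S hπ
  set a := N1 S R β ρ with ha
  set P := ∏ r ∈ R.filter fun r => vq S (β r) = ρ, (X - C (red S (β r / θ))) with hP
  obtain ⟨hPd, -⟩ := prod_natDegree S (R.filter fun r => vq S (β r) = ρ) (fun r => red S (β r / θ))
  rw [← hP] at hPd
  have hPc : ∀ m, P.coeff m = red S (E * (algebraMap K Kbar (g.coeff (m + a)) * θ ^ (m + a))) := by
    intro m
    rw [(hm (m + a)).2, coeff_X_pow_mul]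
  set u := E * (θ ^ a * (algebraMap K Kbar π) ^ q₁) with hu
  have hu0 : u ≠ 0 := mul_ne_zero hE (mul_ne_zero (pow_ne_zero _ hθ) (zpow_ne_zero _ hπ0))
  have huv : vq S u = 0 := by
    rw [hu, vq_mul S hE (mul_ne_zero (pow_ne_zero _ hθ) (zpow_ne_zero _ hπ0)),
      vq_mul S (pow_ne_zero _ hθ) (zpow_ne_zero _ hπ0), vq_pow S hθ, vq_zpow S hπ0, hπ1, hρ, hq]
    linarith
  have huv' : 0 ≤ S.v u := by rw [v_nonneg_iff S hu0, huv]
  refine ⟨red S u, ?_, ?_⟩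
  · rw [Ne, red_eq_zero_iff S huv', v_pos_iff S hu0, huv]; exact lt_irrefl _
  ext m
  rw [coeff_C_mul, coeff_expand hn]
  split_ifs with hdvd
  · obtain ⟨j, rfl⟩ := hdvd
    rw [Nat.mul_div_cancel_left _ hn, redEdge_coeff]
    split_ifs with hj
    · rw [hPc]
      by_cases h0 : g.coeff (n * j + a) = 0
      · rw [h0, map_zero, zero_mul, zero_mul, mul_zero, red_zero, mul_zero]
      · have h1 := algMap_ne_zero (Kbar := Kbar) h0
        have hv : 0 ≤ S.v (algebraMap K Kbar (g.coeff (n * j + a)) *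
            (algebraMap K Kbar π) ^ (-(q₁ + (j : ℤ) * M))) := by
          rw [v_nonneg_iff S (mul_ne_zero h1 (zpow_ne_zero _ hπ0)),
            vq_mul S h1 (zpow_ne_zero _ hπ0), vq_zpow S hπ0, hπ1]
          have := hge _ h0
          push_cast at this ⊢
          rw [hq]
          have h3 : (n : ℚ) * j * ρ = - (j * M) := by linear_combination (j : ℚ) * hρM
          linarith
        rw [← red_mul S huv' hv]
        congr 1
        have e1 : θ ^ (n * j + a) = θ ^ a * (algebraMap K Kbar π) ^ (-(M * j)) := by
          rw [pow_add, pow_mul, hθn, ← zpow_natCast (_ ^ (-M)), ← zpow_mul, mul_comm, neg_mul]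
        rw [e1, hu]
        have e2 : (algebraMap K Kbar π) ^ (-(M * j)) = (algebraMap K Kbar π) ^ q₁ *
            (algebraMap K Kbar π) ^ (-(q₁ + (j : ℤ) * M)) := by
          rw [← zpow_add₀ hπ0]; congr 1; ring
        rw [e2]; ring
    · rw [mul_zero]
      symm
      apply coeff_eq_zero_of_natDegree_lt
      rw [hPd]
      have hh : N2 S R β ρ - a = (R.filter fun r => vq S (β r) = ρ).card := by
        rw [N2_eq, ← ha]; omega
      rw [hh, not_le, Nat.div_lt_iff_lt_mul hn] at hj
      rwa [mul_comm]
  · rw [mul_zero]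
    symm
    rw [hPc]
    by_cases h0 : g.coeff (m + a) = 0
    · rw [h0, map_zero, zero_mul, mul_zero, red_zero]
    have h1 := algMap_ne_zero (Kbar := Kbar) h0
    have h2 := mul_ne_zero hE (mul_ne_zero h1 (pow_ne_zero (m + a) hθ))
    rw [red_eq_zero_iff S (hm _).1, v_pos_iff S h2]
    have h3 := (v_nonneg_iff S h2).mp (hm _).1
    apply lt_of_le_of_ne h3
    intro h4
    rw [vq_mul S hE (mul_ne_zero h1 (pow_ne_zero _ hθ)), vq_mul S h1 (pow_ne_zero _ hθ),
      vq_pow S hθ, hρ] at h4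
    obtain ⟨z, hz⟩ := S.v_base_int _ h0
    rw [vq_eq_of S hz] at h4
    have h5 : (z : ℚ) - q₁ + m * ρ = 0 := by
      push_cast at h4
      rw [hq]; linarith
    have h6 : (m : ℚ) * M = (z - q₁) * n := by linear_combination (-(n : ℚ)) * h5 + (m : ℚ) * hρM
    have h7 : (m : ℤ) * M = (z - q₁) * n := by exact_mod_cast h6
    apply hdvd
    have h8 : (n : ℤ) ∣ (m : ℤ) * M := ⟨z - q₁, by rw [h7]; ring⟩
    have h9 := Int.natAbs_dvd_natAbs.mpr h8
    rw [Int.natAbs_mul, Int.natAbs_natCast, Int.natAbs_natCast] at h9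
    exact hcop.symm.dvd_of_dvd_mul_right h9

lemma redEdge_separable_iff (π : K) (hπ : S.vK π = ((1 : ℚ) : WithTop ℚ))
    (p : ℕ) (hp : p.Prime) (hres : ((0 : ℚ) : WithTop ℚ) < S.vK (p : K))
    (g : K[X]) (R : Finset Kbar) (β : Kbar → Kbar) (hβ : ∀ r ∈ R, β r ≠ 0)
    (c : Kbar) (hc : c ≠ 0)
    (hG : g.map (algebraMap K Kbar) = C c * ∏ r ∈ R, (X - C (β r)))
    (ρ : ℚ) (n : ℕ) (hn : n = ρ.den) (M : ℤ) (hρM : ρ * n = - M) (q₁ : ℤ)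
    (hq : (q₁ : ℚ) = vq S (algebraMap K Kbar (g.coeff (N1 S R β ρ)))) :
    (redEdge S π g (N1 S R β ρ) (N2 S R β ρ) q₁ M n).Separable ↔
      ∀ r ∈ R.filter (fun r => vq S (β r) = ρ),
        ((R.filter (fun r => vq S (β r) = ρ)).filter
          fun r' => (ρ : WithTop ℚ) < S.v (β r' - β r)).card ≤ p ^ (ρ.den.factorization p) := by
  have hn0 : 0 < n := by rw [hn]; exact ρ.den_pos
  have hMn : M = - ρ.num := by
    have h1 : ρ * ρ.den = ρ.num := Rat.mul_den_eq_num ρ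
    rw [hn, h1] at hρM
    have : (M : ℚ) = ((-ρ.num : ℤ) : ℚ) := by push_cast; linarith
    exact_mod_cast this
  have hcop : Nat.Coprime M.natAbs n := by
    rw [hMn, Int.natAbs_neg, hn]; exact ρ.reduced
  obtain ⟨θ, hθ, hθn, hθv⟩ := exists_theta S π hπ n hn0 (-M)
  have hθρ : vq S θ = ρ := by
    rw [hθv]
    have : (n : ℚ) ≠ 0 := by exact_mod_cast hn0.ne'
    push_cast
    rw [← hρM]; field_simp
  obtain ⟨u, hu, heq⟩ := redEdge_expand S π hπ g R β hβ c hc hG n hn0 M hcop θ hθ hθn ρ hθρ hρM q₁ hq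
  have := maxIdeal_isMaximal S
  have hpk : ((p : ℕ) : Residue S) = 0 := by
    have h1 : ((p : ℕ) : Residue S) = Ideal.Quotient.mk (maxIdeal S) (p : intRing S) := by simp
    rw [h1, Ideal.Quotient.eq_zero_iff_mem]
    change (0 : WithTop ℚ) < S.v ((p : intRing S) : Kbar)
    have h2 : (((p : ℕ) : intRing S) : Kbar) = algebraMap K Kbar (p : K) := by simp
    rw [h2]; exact hres
  have hb : ∀ r ∈ R.filter (fun r => vq S (β r) = ρ), red S (β r / θ) ≠ 0 := by
    intro r hr
    obtain ⟨hrR, hr2⟩ := Finset.mem_filter.mp hr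
    exact red_div_ne_zero S (hβ r hrR) hθ (hr2.trans hθρ.symm)
  have key := @separable_iff_count (Residue S) Kbar (Ideal.Quotient.field _) p hp hpk n hn0 u hu
    _ _ _ hb heq
  refine key.trans ?_
  rw [hn]
  apply forall₂_congr
  intro r hr
  have hcongr : (R.filter (fun r => vq S (β r) = ρ)).filter
      (fun r' => red S (β r' / θ) = red S (β r / θ)) =
      (R.filter (fun r => vq S (β r) = ρ)).filter
        (fun r' => (ρ : WithTop ℚ) < S.v (β r' - β r)) := by
    apply Finset.filter_congr
    intro r' hr'
    obtain ⟨hrR, hr2⟩ := Finset.mem_filter.mp hr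
    obtain ⟨hrR', hr2'⟩ := Finset.mem_filter.mp hr'
    have i1 : 0 ≤ S.v (β r / θ) := by
      rw [v_nonneg_iff S (div_ne_zero (hβ r hrR) hθ), vq_div S (hβ r hrR) hθ, hr2, hθρ, sub_self]
    have i2 : 0 ≤ S.v (β r' / θ) := by
      rw [v_nonneg_iff S (div_ne_zero (hβ r' hrR') hθ), vq_div S (hβ r' hrR') hθ, hr2', hθρ, sub_self]
    rw [← sub_eq_zero, ← red_sub S i2 i1]
    by_cases he : β r' - β r = 0
    · rw [← sub_div, he, zero_div, red_zero, (S.v_top_iff 0).mpr rfl]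
      simp
    have i3 : 0 ≤ S.v (β r' / θ - β r / θ) := ((intRing S).sub_mem (x := β r' / θ) (y := β r / θ) i2 i1)
    rw [red_eq_zero_iff S i3, ← sub_div, v_pos_iff S (div_ne_zero he hθ), vq_div S he hθ, hθρ,
      coe_vq S he, sub_pos]
    norm_cast
  rw [hcongr]

end keyfacts
section polygon

variable (S : Setup K Kbar)

lemma key_np (π : K) (hπ : S.vK π = ((1 : ℚ) : WithTop ℚ))
    (g : K[X]) (R : Finset Kbar) (β : Kbar → Kbar) (hβ : ∀ r ∈ R, β r ≠ 0)
    (c : Kbar) (hc : c ≠ 0)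
    (hG : g.map (algebraMap K Kbar) = C c * ∏ r ∈ R, (X - C (β r))) (ρ : ℚ) :
    ∃ e : ℚ, (∀ m (q : ℚ), S.vK (g.coeff m) = (q : WithTop ℚ) → e ≤ q + m * ρ) ∧
      (∃ q : ℚ, S.vK (g.coeff (N1 S R β ρ)) = (q : WithTop ℚ) ∧ q + (N1 S R β ρ : ℕ) * ρ = e) ∧
      (∃ q : ℚ, S.vK (g.coeff (N2 S R β ρ)) = (q : WithTop ℚ) ∧ q + (N2 S R β ρ : ℕ) * ρ = e) ∧
      (∀ m (q : ℚ), S.vK (g.coeff m) = (q : WithTop ℚ) → q + m * ρ = e →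
        N1 S R β ρ ≤ m ∧ m ≤ N2 S R β ρ) := by
  obtain ⟨θ, hθ, -, hθv⟩ := exists_theta S π hπ ρ.den ρ.den_pos ρ.num
  rw [Rat.num_div_den] at hθv
  obtain ⟨E, hE, -, h1, ⟨h2, h2'⟩, ⟨h3, h3'⟩, h4⟩ := key_val S g R β hβ c hc hG θ hθ ρ hθv
  have hne : ∀ m (q : ℚ), S.vK (g.coeff m) = (q : WithTop ℚ) → g.coeff m ≠ 0 := by
    intro m q hq h0
    apply ne_zero_of_v S hq
    rw [h0, map_zero]
  refine ⟨- vq S E, ?_, ⟨_, coe_vq S (algMap_ne_zero h2), h2'⟩,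
    ⟨_, coe_vq S (algMap_ne_zero h3), h3'⟩, ?_⟩
  · intro m q hq
    have := h1 m (hne m q hq)
    rwa [vq_eq_of S hq] at this
  · intro m q hq he
    apply h4 m (hne m q hq)
    rwa [vq_eq_of S hq]

lemma slope_mul {g : K[X]} {s : ℕ} {i : Fin (s + 1) → ℕ} {c : Fin (s + 1) → ℚ}
    (h : IsNPVertices S g s i c) (j : Fin s) :
    (0 : ℚ) < (i j.succ : ℚ) - (i j.castSucc : ℚ) ∧
    c j.succ - c j.castSucc = NPslope i c j * ((i j.succ : ℚ) - (i j.castSucc : ℚ)) ∧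
    ∀ (m : ℕ) (q : ℚ), S.vK (g.coeff m) = (q : WithTop ℚ) →
      NPslope i c j * ((m : ℚ) - i j.castSucc) ≤ q - c j.castSucc := by
  have h0 : (0 : ℚ) < (i j.succ : ℚ) - (i j.castSucc : ℚ) := by
    have := h.mono (Fin.castSucc_lt_succ (i := j))
    rw [sub_pos]; exact_mod_cast this
  have h1 : c j.succ - c j.castSucc = NPslope i c j * ((i j.succ : ℚ) - (i j.castSucc : ℚ)) := by
    unfold NPslope; field_simp
  refine ⟨h0, h1, ?_⟩
  intro m q hq
  have h2 := h.support j m q hq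
  rw [h1] at h2
  have h3 : (NPslope i c j * ((m : ℚ) - i j.castSucc)) * ((i j.succ : ℚ) - (i j.castSucc : ℚ)) ≤
      (q - c j.castSucc) * ((i j.succ : ℚ) - (i j.castSucc : ℚ)) := by linarith
  exact le_of_mul_le_mul_right h3 h0

lemma edge_ends (π : K) (hπ : S.vK π = ((1 : ℚ) : WithTop ℚ))
    (g : K[X]) (R : Finset Kbar) (β : Kbar → Kbar) (hβ : ∀ r ∈ R, β r ≠ 0)
    (a : Kbar) (ha : a ≠ 0)
    (hG : g.map (algebraMap K Kbar) = C a * ∏ r ∈ R, (X - C (β r)))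
    (htr : g.natTrailingDegree = 0) (hdeg : g.natDegree = R.card)
    {s : ℕ} {i : Fin (s + 1) → ℕ} {c : Fin (s + 1) → ℚ}
    (h : IsNPVertices S g s i c) (j : Fin s) (ρ : ℚ) (hρ : NPslope i c j = - ρ) :
    i j.castSucc = N1 S R β ρ ∧ i j.succ = N2 S R β ρ := by
  obtain ⟨e, h1, ⟨qa, h2, h2'⟩, ⟨qb, h3, h3'⟩, h4⟩ := key_np S π hπ g R β hβ a ha hG ρ
  obtain ⟨hpos, hsl, hsup⟩ := slope_mul S h j
  rw [hρ] at hsl hsup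
  have ea : c j.castSucc + (i j.castSucc) * ρ = e := by
    have u1 := h1 _ _ (h.vert j.castSucc)
    have u2 := hsup _ _ h2
    linarith
  have eb : c j.succ + (i j.succ) * ρ = e := by linarith
  have ia := h4 _ _ (h.vert j.castSucc) ea
  have ib := h4 _ _ (h.vert j.succ) eb
  constructor
  · apply le_antisymm _ ia.1
    by_contra hlt
    push Not at hlt
    have hj : 0 < (j : ℕ) := by
      rw [Nat.pos_iff_ne_zero]
      intro h0
      have : j.castSucc = 0 := Fin.ext h0
      rw [this, h.first, htr] at hlt
      omega
    let j' : Fin s := ⟨j - 1, by omega⟩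
    have hj' : j'.succ = j.castSucc := Fin.ext (by simp [j']; omega)
    have hlt' : j' < j := by rw [Fin.lt_def]; simp only [j']; omega
    have hs := h.slope_mono hlt'
    obtain ⟨-, hsl', hsup'⟩ := slope_mul S h j'
    have u := hsup' _ _ h2
    rw [hj'] at hsl'
    rw [hρ] at hs
    have hq : ((N1 S R β ρ : ℕ) : ℚ) < i j.castSucc := by exact_mod_cast hlt
    nlinarith
  · apply le_antisymm ib.2
    by_contra hlt
    push Not at hlt
    have hN2 : N2 S R β ρ ≤ R.card := Finset.card_filter_le _ _
    have hj : (j : ℕ) + 1 < s := by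
      by_contra hcon
      have : j.succ = Fin.last s := Fin.ext (by simp; omega)
      rw [this, h.last, hdeg] at hlt
      omega
    let j' : Fin s := ⟨j + 1, hj⟩
    have hj' : j'.castSucc = j.succ := Fin.ext (by simp [j'])
    have hlt' : j < j' := by rw [Fin.lt_def]; simp only [j']; omega
    have hs := h.slope_mono hlt'
    obtain ⟨-, hsl', hsup'⟩ := slope_mul S h j'
    have u := hsup' _ _ h3
    rw [hj'] at u
    rw [hρ] at hs
    have hq : (i j.succ : ℚ) < ((N2 S R β ρ : ℕ) : ℚ) := by exact_mod_cast hlt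
    nlinarith

lemma exists_vertices (π : K) (hπ : S.vK π = ((1 : ℚ) : WithTop ℚ))
    (g : K[X]) (R : Finset Kbar) (β : Kbar → Kbar) (hβ : ∀ r ∈ R, β r ≠ 0)
    (a : Kbar) (ha : a ≠ 0)
    (hG : g.map (algebraMap K Kbar) = C a * ∏ r ∈ R, (X - C (β r)))
    (htr : g.natTrailingDegree = 0) (hdeg : g.natDegree = R.card) (hg : g ≠ 0) :
    ∃ (s : ℕ) (i : Fin (s + 1) → ℕ) (c : Fin (s + 1) → ℚ), IsNPVertices S g s i c ∧
      ∀ r ∈ R, ∃ j, NPslope i c j = - vq S (β r) := by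
  let V : Finset ℚ := R.image fun r => - vq S (β r)
  let l := V.orderEmbOfFin rfl
  have hl : ∀ r ∈ R, ∃ k, l k = - vq S (β r) := by
    intro r hr
    have : - vq S (β r) ∈ V := Finset.mem_image_of_mem _ hr
    have h2 : - vq S (β r) ∈ Set.range l := by
      rw [Finset.range_orderEmbOfFin]; exact this
    exact h2
  have hl' : ∀ k, ∃ r ∈ R, - vq S (β r) = l k := by
    intro k
    have : l k ∈ V := Finset.orderEmbOfFin_mem V rfl k
    obtain ⟨r, hr, h⟩ := Finset.mem_image.mp this
    exact ⟨r, hr, h⟩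
  let i : Fin (V.card + 1) → ℕ := fun j =>
    (R.filter fun r => ∃ k : Fin V.card, k.castSucc < j ∧ - vq S (β r) = l k).card
  let c : Fin (V.card + 1) → ℚ := fun j => vq S (algebraMap K Kbar (g.coeff (i j)))
  have hi1 : ∀ j : Fin V.card, i j.castSucc = N1 S R β (- l j) := by
    intro j
    simp only [i, N1]
    congr 1
    apply Finset.filter_congr
    intro r hr
    constructor
    · rintro ⟨k, hk, hk'⟩
      have : l k < l j := l.strictMono (by simpa using hk)
      linarith
    · intro h
      obtain ⟨k, hk⟩ := hl r hr
      refine ⟨k, ?_, hk.symm⟩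
      rw [Fin.castSucc_lt_castSucc_iff, ← l.lt_iff_lt, hk]
      linarith
  have hi2 : ∀ j : Fin V.card, i j.succ = N2 S R β (- l j) := by
    intro j
    simp only [i, N2]
    congr 1
    apply Finset.filter_congr
    intro r hr
    constructor
    · rintro ⟨k, hk, hk'⟩
      have : l k ≤ l j := l.monotone (by simpa [Fin.castSucc_lt_succ_iff] using hk)
      linarith
    · intro h
      obtain ⟨k, hk⟩ := hl r hr
      refine ⟨k, ?_, hk.symm⟩
      rw [Fin.castSucc_lt_succ_iff, ← l.le_iff_le, hk]
      linarith
  have hlast : i (Fin.last _) = R.card := by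
    simp only [i]
    congr 1
    apply Finset.filter_true_of_mem
    intro r hr
    obtain ⟨k, hk⟩ := hl r hr
    exact ⟨k, Fin.castSucc_lt_last k, hk.symm⟩
  have hmono : StrictMono i := by
    rw [Fin.strictMono_iff_lt_succ]
    intro j
    rw [hi1, hi2, N2_eq]
    obtain ⟨r, hr, h⟩ := hl' j
    have : 0 < (R.filter fun r => vq S (β r) = - l j).card :=
      Finset.card_pos.mpr ⟨r, Finset.mem_filter.mpr ⟨hr, by linarith⟩⟩
    omega
  have hvert : ∀ j, S.vK (g.coeff (i j)) = ((c j : ℚ) : WithTop ℚ) := by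
    intro j
    apply coe_vq S
    induction j using Fin.lastCases with
    | last =>
      rw [hlast, ← hdeg]
      exact algMap_ne_zero (leadingCoeff_ne_zero.mpr hg)
    | cast j =>
      obtain ⟨e, -, ⟨qa, h2, -⟩, -, -⟩ := key_np S π hπ g R β hβ a ha hG (- l j)
      rw [hi1]
      exact ne_zero_of_v S h2
  have hline : ∀ j : Fin V.card, ∃ e : ℚ, c j.castSucc - i j.castSucc * l j = e ∧
      c j.succ - i j.succ * l j = e ∧
      ∀ m (q : ℚ), S.vK (g.coeff m) = (q : WithTop ℚ) → e ≤ q - m * l j := by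
    intro j
    obtain ⟨e, h1, ⟨qa, h2, h2'⟩, ⟨qb, h3, h3'⟩, -⟩ := key_np S π hπ g R β hβ a ha hG (- l j)
    refine ⟨e, ?_, ?_, ?_⟩
    · have : c j.castSucc = qa := by
        simp only [c]; rw [hi1]; exact vq_eq_of S h2
      rw [this, hi1]; linarith
    · have : c j.succ = qb := by
        simp only [c]; rw [hi2]; exact vq_eq_of S h3
      rw [this, hi2]; linarith
    · intro m q hq
      have := h1 m q hq
      linarith
  have hdiff : ∀ j : Fin V.card, (0 : ℚ) < (i j.succ : ℚ) - (i j.castSucc : ℚ) := by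
    intro j
    rw [sub_pos]
    exact_mod_cast hmono (Fin.castSucc_lt_succ (i := j))
  have hslope : ∀ j, NPslope i c j = l j := by
    intro j
    obtain ⟨e, e1, e2, -⟩ := hline j
    unfold NPslope
    rw [div_eq_iff (hdiff j).ne']
    linarith
  refine ⟨V.card, i, c, ⟨hmono, ?_, ?_, hvert, ?_, ?_⟩, ?_⟩
  · rw [htr]
    simp only [i]
    rw [Finset.card_eq_zero, Finset.filter_eq_empty_iff]
    rintro r - ⟨k, hk, -⟩
    exact absurd hk (Fin.not_lt_zero _)
  · rw [hlast, hdeg]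
  · intro j k hjk
    rw [hslope, hslope]; exact l.strictMono hjk
  · intro j m q hq
    obtain ⟨e, e1, e2, e3⟩ := hline j
    have h5 := e3 m q hq
    have h6 : c j.succ - c j.castSucc = l j * ((i j.succ : ℚ) - (i j.castSucc : ℚ)) := by linarith
    rw [h6]
    have h7 : l j * ((m : ℚ) - i j.castSucc) ≤ q - c j.castSucc := by linarith
    have := mul_le_mul_of_nonneg_right h7 (hdiff j).le
    linarith
  · intro r hr
    obtain ⟨k, hk⟩ := hl r hr
    exact ⟨k, (hslope k).trans hk⟩

end polygon
section main

variable (S : Setup K Kbar)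

lemma padicNorm_lt_iff (p : ℕ) (hp : p.Prime) (ρ : ℚ) (N : ℕ) (hN : 1 < N) :
    padicNorm p ρ < (N : ℚ) ↔ p ^ (ρ.den.factorization p) < N := by
  have := Fact.mk hp
  by_cases h0 : ρ = 0
  · subst h0
    simp only [padicNorm.zero, Rat.den_zero, Nat.factorization_one]
    constructor
    · intro _; simpa using hN
    · intro _; exact_mod_cast (by omega : 0 < N)
  have hv : padicValRat p ρ = (padicValInt p ρ.num : ℤ) - padicValNat p ρ.den := rfl
  rw [Nat.factorization_def _ hp]
  by_cases hd : p ∣ ρ.den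
  · have hnum : padicValInt p ρ.num = 0 := by
      apply padicValInt.eq_zero_of_not_dvd
      intro h
      have h1 : p ∣ ρ.num.natAbs := Int.natCast_dvd.mp h
      have h2 := Nat.dvd_gcd h1 hd
      rw [ρ.reduced] at h2
      exact hp.one_lt.ne' (Nat.dvd_one.mp h2)
    rw [padicNorm.eq_zpow_of_nonzero h0, hv, hnum]
    simp only [Nat.cast_zero, zero_sub, neg_neg, zpow_natCast]
    norm_cast
  · rw [padicValNat.eq_zero_of_not_dvd hd, pow_zero]
    refine ⟨fun _ => hN, fun _ => ?_⟩
    have h1 : padicNorm p ρ ≤ 1 := by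
      rw [padicNorm.eq_zpow_of_nonzero h0, hv, padicValNat.eq_zero_of_not_dvd hd]
      apply zpow_le_one_of_nonpos₀
      · exact_mod_cast hp.one_lt.le
      · simp
    have : (1 : ℚ) < N := by exact_mod_cast hN
    linarith

/-- Size condition on residue classes. -/
def ClassBound (p : ℕ) (R : Finset Kbar) (w : Kbar) : Prop :=
  ∀ ρ : ℚ, ∀ r ∈ R.filter (fun r => vq S (r - w) = ρ),
    ((R.filter (fun r => vq S (r - w) = ρ)).filter
      fun r' => (ρ : WithTop ℚ) < S.v (r' - r)).card ≤ p ^ (ρ.den.factorization p)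

lemma npRegular_iff_classBound (π : K) (hπ : S.vK π = ((1 : ℚ) : WithTop ℚ))
    (p : ℕ) (hp : p.Prime) (hres : ((0 : ℚ) : WithTop ℚ) < S.vK (p : K))
    (g : K[X]) (R : Finset Kbar) (w : Kbar) (hβ : ∀ r ∈ R, r - w ≠ 0)
    (a : Kbar) (ha : a ≠ 0)
    (hG : g.map (algebraMap K Kbar) = C a * ∏ r ∈ R, (X - C (r - w)))
    (htr : g.natTrailingDegree = 0) (hdeg : g.natDegree = R.card) (hg : g ≠ 0) :
    NPRegular S π g ↔ ClassBound S p R w := by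
  constructor
  · intro hreg ρ r hr
    obtain ⟨hrR, hr2⟩ := Finset.mem_filter.mp hr
    obtain ⟨s, i, c, hv, hsl⟩ := exists_vertices S π hπ g R (fun r => r - w) hβ a ha hG htr hdeg hg
    obtain ⟨j, hj⟩ := hsl r hrR
    rw [hr2] at hj
    obtain ⟨he1, he2⟩ := edge_ends S π hπ g R (fun r => r - w) hβ a ha hG htr hdeg hv j ρ hj
    have hne : g.coeff (i j.castSucc) ≠ 0 := by
      intro h0
      apply ne_zero_of_v S (hv.vert j.castSucc)
      rw [h0, map_zero]
    obtain ⟨q₁, hq₁⟩ := S.v_base_int _ hne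
    have hc : (q₁ : ℚ) = c j.castSucc := by
      have := (hv.vert j.castSucc).symm.trans hq₁
      exact (WithTop.coe_injective this).symm
    have hden : ρ.den = (NPslope i c j).den := by rw [hj, Rat.neg_den]
    have hM : ((-ρ.num : ℤ) : ℚ) = (ρ.den : ℚ) * NPslope i c j := by
      rw [hj]; push_cast
      have := Rat.mul_den_eq_num ρ
      linarith
    have hs := hreg s i c hv j q₁ (-ρ.num) ρ.den hc hden hM
    rw [he1, he2] at hs
    have hρM : ρ * (ρ.den : ℕ) = - ((-ρ.num : ℤ) : ℚ) := by
      push_cast; rw [neg_neg]; exact Rat.mul_den_eq_num ρ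
    have hq : (q₁ : ℚ) = vq S (algebraMap K Kbar (g.coeff (N1 S R (fun r => r - w) ρ))) := by
      rw [← he1]; exact (vq_eq_of S hq₁).symm
    have := (redEdge_separable_iff S π hπ p hp hres g R (fun r => r - w) hβ a ha hG ρ ρ.den rfl
      (-ρ.num) hρM q₁ hq).mp hs r hr
    simpa only [sub_sub_sub_cancel_right] using this
  · intro hcb s i c hv j q₁ M n hq hn hM
    obtain ⟨ρ, hρ⟩ : ∃ ρ : ℚ, NPslope i c j = - ρ := ⟨-NPslope i c j, by ring⟩
    obtain ⟨he1, he2⟩ := edge_ends S π hπ g R (fun r => r - w) hβ a ha hG htr hdeg hv j ρ hρ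
    rw [he1, he2]
    have hq' : (q₁ : ℚ) = vq S (algebraMap K Kbar (g.coeff (N1 S R (fun r => r - w) ρ))) := by
      rw [← he1, hq]; exact (vq_eq_of S (hv.vert _)).symm
    rw [redEdge_separable_iff S π hπ p hp hres g R (fun r => r - w) hβ a ha hG ρ n
      (by rw [hn, hρ, Rat.neg_den]) M (by rw [hM, hρ]; ring) q₁ hq']
    intro r hr
    simpa only [sub_sub_sub_cancel_right] using hcb ρ r hr

lemma v_sub_ge {x y : Kbar} {q : WithTop ℚ} (hx : q ≤ S.v x) (hy : q ≤ S.v y) :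
    q ≤ S.v (x - y) := (addV S).map_le_sub hx hy

lemma v_sub_gt {x y : Kbar} {q : WithTop ℚ} (hx : q < S.v x) (hy : q < S.v y) :
    q < S.v (x - y) := lt_of_lt_of_le (lt_min hx hy) ((addV S).map_sub x y)

lemma v_add_eq {x y : Kbar} (h : S.v x < S.v y) : S.v (x + y) = S.v x :=
  (addV S).map_add_eq_of_lt_left h

lemma v_sub_swap (x y : Kbar) : S.v (x - y) = S.v (y - x) := (addV S).map_sub_swap x y

lemma classBound_iff (p : ℕ) (hp : p.Prime) (f : K[X]) (w : K)
    (hR : ∀ r ∈ rootFinset f, r - algebraMap K Kbar w ≠ 0) :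
    ClassBound S p (rootFinset f) (algebraMap K Kbar w) ↔
      ((∀ s : Finset Kbar, IsCluster S f s → 1 < s.card → IsRationalCentre S s w) ∧
       (∀ s : Finset Kbar, IsCluster S f s → 1 < s.card →
         ∀ (w' : K) (ρ : ℚ), IsRationalCentre S s w' →
           dminK S s w' = ((ρ : ℚ) : WithTop ℚ) →
           padicNorm p ρ < (s.card : ℚ) → depth S s = ((ρ : ℚ) : WithTop ℚ))) := by
  have hdep : ∀ (s : Finset Kbar) (ρ : ℚ), (ρ : WithTop ℚ) < depth S s ↔
      ∀ r ∈ s, ∀ r' ∈ s, (ρ : WithTop ℚ) < S.v (r - r') := by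
    intro s ρ
    unfold depth
    rw [Finset.lt_inf_iff (WithTop.coe_lt_top ρ)]
    apply forall₂_congr
    intro r _
    rw [Finset.lt_inf_iff (WithTop.coe_lt_top ρ)]
  constructor
  · intro hcb
    have hfin : ∀ s, IsCluster S f s → ∃ ρ : ℚ, dminK S s w = (ρ : WithTop ℚ) := by
      intro s hs
      obtain ⟨hne, z, δ, hsδ⟩ := hs
      obtain ⟨r, hr, hr'⟩ := Finset.exists_mem_eq_inf s hne
        (fun r => S.v (r - algebraMap K Kbar w))
      have hrR : r ∈ rootFinset f := by
        rw [hsδ] at hr; exact (Finset.mem_filter.mp hr).1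
      exact ⟨_, hr'.trans (coe_vq S (hR r hrR))⟩
    have hmain : ∀ s, IsCluster S f s → ∀ ρ : ℚ, dminK S s w = (ρ : WithTop ℚ) →
        depth S s = (ρ : WithTop ℚ) ∨ ((∀ r ∈ s, S.v (r - algebraMap K Kbar w) = (ρ : WithTop ℚ)) ∧
          s.card ≤ p ^ (ρ.den.factorization p)) := by
      intro s hs ρ hρ
      have hmem : ∀ r ∈ s, r ∈ rootFinset f := by
        obtain ⟨hne, z, δ, hsδ⟩ := hs
        intro r hr
        rw [hsδ] at hr; exact (Finset.mem_filter.mp hr).1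
      have hle : ∀ r ∈ s, (ρ : WithTop ℚ) ≤ S.v (r - algebraMap K Kbar w) := by
        intro r hr
        rw [← hρ]; exact Finset.inf_le (f := fun r => S.v (r - algebraMap K Kbar w)) hr
      have hge : (ρ : WithTop ℚ) ≤ depth S s := by
        unfold depth
        rw [Finset.le_inf_iff]
        intro r hr
        rw [Finset.le_inf_iff]
        intro r' hr'
        have := v_sub_ge S (hle r hr) (hle r' hr')
        rwa [sub_sub_sub_cancel_right] at this
      rcases hge.lt_or_eq with hlt | heq
      · right
        rw [hdep] at hlt
        obtain ⟨r0, hr0, hr0'⟩ := Finset.exists_mem_eq_inf s hs.1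
          (fun r => S.v (r - algebraMap K Kbar w))
        have hv0 : S.v (r0 - algebraMap K Kbar w) = (ρ : WithTop ℚ) := hr0'.symm.trans hρ
        have hall : ∀ r ∈ s, S.v (r - algebraMap K Kbar w) = (ρ : WithTop ℚ) := by
          intro r hr
          have : S.v (r0 - algebraMap K Kbar w) < S.v (r - r0) := by
            rw [hv0]; exact hlt r hr r0 hr0
          have h2 := v_add_eq S this
          rw [hv0] at h2
          rw [← h2]; congr 1; ring
        refine ⟨hall, ?_⟩
        have hr0B : r0 ∈ (rootFinset f).filter
            (fun r => vq S (r - algebraMap K Kbar w) = ρ) :=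
          Finset.mem_filter.mpr ⟨hmem r0 hr0, vq_eq_of S hv0⟩
        refine le_trans (Finset.card_le_card ?_) (hcb ρ r0 hr0B)
        intro r hr
        rw [Finset.mem_filter, Finset.mem_filter]
        exact ⟨⟨hmem r hr, vq_eq_of S (hall r hr)⟩, hlt r hr r0 hr0⟩
      · left; exact heq.symm
    have hcentre : ∀ s : Finset Kbar, IsCluster S f s → 1 < s.card → IsRationalCentre S s w := by
      intro s hs hcard w'
      by_contra hlt
      push Not at hlt
      obtain ⟨ρ, hρ⟩ := hfin s hs
      rw [hρ] at hlt
      have hlt' : ∀ r ∈ s, (ρ : WithTop ℚ) < S.v (r - algebraMap K Kbar w') :=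
        (Finset.lt_inf_iff (WithTop.coe_lt_top ρ)).mp hlt
      have hd : (ρ : WithTop ℚ) < depth S s := by
        rw [hdep]
        intro r hr r' hr'
        have := v_sub_gt S (hlt' r hr) (hlt' r' hr')
        rwa [sub_sub_sub_cancel_right] at this
      rcases hmain s hs ρ hρ with h | ⟨hall, hc⟩
      · rw [h] at hd; exact lt_irrefl _ hd
      · obtain ⟨r, hr⟩ := hs.1
        have h1 : S.v (algebraMap K Kbar (w' - w)) = (ρ : WithTop ℚ) := by
          have h2 : S.v (r - algebraMap K Kbar w) < S.v (-(r - algebraMap K Kbar w')) := by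
            rw [S.v_neg, hall r hr]; exact hlt' r hr
          have h3 := v_add_eq S h2
          rw [hall r hr] at h3
          rw [← h3, map_sub]; congr 1; ring
        have h2 : w' - w ≠ 0 := by
          intro h0
          apply ne_zero_of_v S h1
          rw [h0, map_zero]
        obtain ⟨z, hz⟩ := S.v_base_int _ h2
        have h3 : ρ = (z : ℚ) := WithTop.coe_injective (h1.symm.trans hz)
        rw [h3] at hc
        simp at hc
        omega
    refine ⟨hcentre, ?_⟩
    intro s hs hcard w' ρ hw' hρ hlt
    have hρw : dminK S s w = (ρ : WithTop ℚ) :=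
      (le_antisymm (hw' w) (hcentre s hs hcard w')).trans hρ
    rcases hmain s hs ρ hρw with h | ⟨-, hc⟩
    · exact h
    · rw [padicNorm_lt_iff p hp ρ _ hcard] at hlt
      omega
  · rintro ⟨hcentre, halm⟩ ρ r hr
    by_contra hcon
    push Not at hcon
    obtain ⟨hrR, hr2⟩ := Finset.mem_filter.mp hr
    have hrv : S.v (r - algebraMap K Kbar w) = (ρ : WithTop ℚ) := by
      rw [coe_vq S (hR r hrR), hr2]
    set T := ((rootFinset f).filter (fun r => vq S (r - algebraMap K Kbar w) = ρ)).filter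
      (fun r' => (ρ : WithTop ℚ) < S.v (r' - r)) with hT
    have hcard : 1 < T.card := lt_of_le_of_lt (Nat.one_le_pow _ _ hp.pos) hcon
    have hrT : r ∈ T := by
      rw [hT, Finset.mem_filter, sub_self, (S.v_top_iff 0).mpr rfl]
      exact ⟨hr, WithTop.coe_lt_top ρ⟩
    have hTmem : ∀ x ∈ T, x ∈ rootFinset f ∧ S.v (x - algebraMap K Kbar w) = (ρ : WithTop ℚ) ∧
        (ρ : WithTop ℚ) < S.v (x - r) := by
      intro x hx
      obtain ⟨hx1, hx2⟩ := Finset.mem_filter.mp hx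
      obtain ⟨hx3, hx4⟩ := Finset.mem_filter.mp hx1
      exact ⟨hx3, by rw [coe_vq S (hR x hx3), hx4], hx2⟩
    have hδρ : (ρ : WithTop ℚ) < dmin S T r :=
      (Finset.lt_inf_iff (WithTop.coe_lt_top ρ)).mpr fun x hx => (hTmem x hx).2.2
    have hδtop : dmin S T r ≠ ⊤ := by
      obtain ⟨x, hx, hxr⟩ := Finset.exists_mem_ne hcard r
      have h1 : dmin S T r ≤ S.v (x - r) := Finset.inf_le (f := fun x => S.v (x - r)) hx
      intro h
      rw [h, top_le_iff, S.v_top_iff, sub_eq_zero] at h1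
      exact hxr h1
    obtain ⟨δ, hδ⟩ := WithTop.ne_top_iff_exists.mp hδtop
    have hcl : IsCluster S f T := by
      refine ⟨⟨r, hrT⟩, r, δ, ?_⟩
      ext x
      refine Iff.trans ?_ Finset.mem_filter.symm
      rw [hδ]
      constructor
      · intro hx
        exact ⟨(hTmem x hx).1, Finset.inf_le (f := fun x => S.v (x - r)) hx⟩
      · rintro ⟨hx1, hx2⟩
        have hx3 := lt_of_lt_of_le hδρ hx2
        rw [hT, Finset.mem_filter, Finset.mem_filter]
        refine ⟨⟨hx1, ?_⟩, hx3⟩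
        apply vq_eq_of S
        rw [← hrv] at hx3 ⊢
        rw [← v_add_eq S hx3]; congr 1; ring
    have hdm : dminK S T w = (ρ : WithTop ℚ) := by
      apply le_antisymm
      · rw [← hrv]
        exact Finset.inf_le (f := fun x => S.v (x - algebraMap K Kbar w)) hrT
      · unfold dminK dmin
        rw [Finset.le_inf_iff]
        intro x hx
        exact (hTmem x hx).2.1.ge
    have hd := halm T hcl hcard w ρ (hcentre T hcl hcard) hdm
      ((padicNorm_lt_iff p hp ρ _ hcard).mpr hcon)
    have hd' : (ρ : WithTop ℚ) < depth S T := by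
      rw [hdep]
      intro x hx y hy
      have := v_sub_gt S (hTmem x hx).2.2 (hTmem y hy).2.2
      rwa [sub_sub_sub_cancel_right] at this
    rw [hd] at hd'
    exact lt_irrefl _ hd'

end main

/-- **NP-regularity after translation.** Let `w ∈ K` with `f(w) ≠ 0`. Then `f(x + w)` is
NP-regular iff every proper cluster `s ∈ Σ_f` has `w` as a rational centre and every proper
cluster `s ∈ Σ_f` with `|s| > |ρ_s|_p` satisfies `d_s = ρ_s`. -/
theorem npRegular_translate_iff
    (S : Setup K Kbar) (π : K) (hπ : S.vK π = ((1 : ℚ) : WithTop ℚ))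
    (p : ℕ) (hp : p.Prime) (hres : ((0 : ℚ) : WithTop ℚ) < S.vK (p : K))
    (f : K[X]) (hsep : f.Separable) (hdeg : 1 ≤ f.natDegree)
    (w : K) (hw : f.eval w ≠ 0) :
    NPRegular S π (f.comp (Polynomial.X + Polynomial.C w)) ↔
      ((∀ s : Finset Kbar, IsCluster S f s → 1 < s.card → IsRationalCentre S s w) ∧
       (∀ s : Finset Kbar, IsCluster S f s → 1 < s.card →
         ∀ (w' : K) (ρ : ℚ), IsRationalCentre S s w' →
           dminK S s w' = ((ρ : ℚ) : WithTop ℚ) →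
           padicNorm p ρ < (s.card : ℚ) → depth S s = ((ρ : ℚ) : WithTop ℚ))) := by
  have hac := S.algClosed
  set φ := algebraMap K Kbar with hφ
  have hf0 : f ≠ 0 := hsep.ne_zero
  have hfm0 : f.map φ ≠ 0 := by rwa [Ne, Polynomial.map_eq_zero]
  have hspl : (f.map φ).Splits := IsAlgClosed.splits _
  have hnd : (f.map φ).roots.Nodup := nodup_roots hsep.map
  have hval : (rootFinset (Kbar := Kbar) f).val = (f.map φ).roots := by
    unfold rootFinset
    rw [Multiset.toFinset_val, Multiset.dedup_eq_self.mpr hnd]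
  have hfac : f.map φ = C (φ f.leadingCoeff) * ∏ r ∈ rootFinset f, (X - C r) := by
    have h1 := hspl.eq_prod_roots
    rw [leadingCoeff_map] at h1
    rw [h1]
    congr 1
    rw [Finset.prod, hval]
  have hcard : (rootFinset (Kbar := Kbar) f).card = f.natDegree := by
    rw [Finset.card, hval, ← hspl.natDegree_eq_card_roots, natDegree_map]
  have hR : ∀ r ∈ rootFinset f, r - φ w ≠ 0 := by
    intro r hr h0
    rw [sub_eq_zero] at h0
    have h1 : r ∈ (f.map φ).roots := by rw [← hval]; exact hr
    have h2 := (mem_roots hfm0).mp h1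
    rw [h0, IsRoot, eval_map, eval₂_at_apply] at h2
    exact hw ((map_eq_zero φ).mp h2)
  set g := f.comp (Polynomial.X + Polynomial.C w) with hg
  have hgdeg : g.natDegree = f.natDegree := by
    rw [hg, natDegree_comp, natDegree_X_add_C, mul_one]
  have hg0 : g ≠ 0 := by
    intro h0
    rw [h0, natDegree_zero] at hgdeg
    omega
  have hgc : g.coeff 0 ≠ 0 := by
    rw [coeff_zero_eq_eval_zero, hg, eval_comp]
    simpa using hw
  have htr : g.natTrailingDegree = 0 := natTrailingDegree_eq_zero.mpr (Or.inr hgc)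
  have hG : g.map φ = C (φ f.leadingCoeff) * ∏ r ∈ rootFinset f, (X - C (r - φ w)) := by
    rw [hg, Polynomial.map_comp, hfac, mul_comp, C_comp, prod_comp]
    congr 1
    apply Finset.prod_congr rfl
    intro r _
    simp only [sub_comp, X_comp, C_comp, Polynomial.map_add, map_X, map_C, C_sub]
    ring
  have hlc : φ f.leadingCoeff ≠ 0 := by simpa using hf0
  rw [npRegular_iff_classBound S π hπ p hp hres g (rootFinset f) (φ w) hR _ hlc hG htr
    (hgdeg.trans hcard.symm) hg0]
  exact classBound_iff S p hp f w hR

end ClusterPicture
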